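/- Let m > 2 and a_1,…,a_m > 0, and let z_k(y) = e^{iψ_k(y)}·√(a_k^{−1}+y²) be as in Lawlor's construction, where ψ_k(y) = a_k ∫_{−∞}^{y} dx/((1+a_kx²)√(P(x))) and P(x) = ((1+a_1x²)⋯(1+a_mx²) − 1)/x² (with P(0) = a_1+⋯+a_m). Define F : ℝ × ℝ^m → ℂ^m by F(y,x) = (z_1(y)x_1, …, z_m(y)x_m). Then for all y ∈ ℝ and all x, v, w ∈ ℝ^m with Σ_j x_j v_j = 0 and Σ_j x_j w_j = 0, the standard symplectic form ω'(u,v) = Σ_{j=1}^m Im(conj(u_j)·v_j) satisfies ω'(∂F/∂y(y,x), D_vF(y,x)) = 0 and ω'(D_vF(y,x), D_wF(y,x)) = 0, where ∂F/∂y(y,x) = (z_1'(y)x_1,…,z_m'(y)x_m) and D_vF(y,x) = (z_1(y)v_1,…,z_m(y)v_m). (Hence Lawlor's m-fold L^{φ,A} = F(ℝ × S^{m−1}) is Lagrangian in ℂ^m.) -/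

import Mathlib

/-!
Writing `z_k = e^{iψ_k} r_k` with `r_k = √(a_k⁻¹ + y²)`, one has
`conj (z_k') z_k = r_k' r_k - i ψ_k' r_k²`, and `ψ_k' = a_k / ((1 + a_k y²) √P)` makes
`Im (conj (z_k') z_k) = -1/√P(y)` independent of `k` (`lawlorZ_im_conj_deriv_mul`). Hence
`ω'(∂F/∂y, D_vF) = -(1/√P(y)) ∑ x_j v_j = 0`, while `ω'(D_vF, D_wF) = 0` because each of its
terms is the imaginary part of the real number `|z_j|² v_j w_j`.

The analytic content is that `ψ_k` is differentiable with the expected derivative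
(`hasDerivAt_lawlorPsi`). This is the fundamental theorem of calculus for the integrand
`1/((1 + a_k x²) √P(x))`, which is continuous because `P` is the slope at `0` of
`t ↦ ∏ (1 + a_i t)` evaluated at `t = x²`, and integrable because `P ≥ ∑ a_i > 0` bounds it
by a multiple of `1/(1 + a_k x²)`.
-/

open MeasureTheory Complex

/-- `p(x) = (1+a₁x²)⋯(1+a_mx²) − 1` from Lawlor's construction. -/
def lawlorP (m : ℕ) (a : Fin m → ℝ) (x : ℝ) : ℝ :=
  (∏ i, (1 + a i * x ^ 2)) - 1

/-- `P(x) = p(x)/x²` for `x ≠ 0`, extended by `P(0) = a₁ + ⋯ + a_m`. -/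
noncomputable def lawlorPP (m : ℕ) (a : Fin m → ℝ) (x : ℝ) : ℝ :=
  if x = 0 then ∑ i, a i else lawlorP m a x / x ^ 2

/-- `ψ_k(y) = a_k ∫_{−∞}^{y} dx/((1+a_kx²)√(P(x)))`. -/
noncomputable def lawlorPsi (m : ℕ) (a : Fin m → ℝ) (k : Fin m) (y : ℝ) : ℝ :=
  a k * ∫ x in Set.Iic y, 1 / ((1 + a k * x ^ 2) * Real.sqrt (lawlorPP m a x))

/-- `z_k(y) = e^{iψ_k(y)} √(a_k⁻¹ + y²)`. -/
noncomputable def lawlorZ (m : ℕ) (a : Fin m → ℝ) (k : Fin m) (y : ℝ) : ℂ :=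
  Complex.exp (Complex.I * (lawlorPsi m a k y : ℂ)) *
    (Real.sqrt ((a k)⁻¹ + y ^ 2) : ℝ)

/-- Standard symplectic form `ω'(u,v) = ∑ Im(conj u_j · v_j)` on `ℂ^m`. -/
noncomputable def stdSymplectic (m : ℕ) (u v : Fin m → ℂ) : ℝ :=
  ∑ j, ((starRingEnd ℂ) (u j) * v j).im

/-- The partial derivative `∂F/∂y(y,x) = (z₁'(y)x₁,…,z_m'(y)x_m)` of
`F(y,x) = (z₁(y)x₁,…,z_m(y)x_m)`. -/
noncomputable def lawlorFDy (m : ℕ) (a : Fin m → ℝ) (y : ℝ) (x : Fin m → ℝ) :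
    Fin m → ℂ :=
  fun j => deriv (lawlorZ m a j) y * (x j : ℂ)

/-- The derivative `D_vF(y,x) = (z₁(y)v₁,…,z_m(y)v_m)` of `F` in the direction `v`
of the `x`-variables. -/
noncomputable def lawlorFDx (m : ℕ) (a : Fin m → ℝ) (y : ℝ) (v : Fin m → ℝ) :
    Fin m → ℂ :=
  fun j => lawlorZ m a j y * (v j : ℂ)

theorem hasDerivAt_prod_one_add_mul_zero (m : ℕ) (a : Fin m → ℝ) :
    HasDerivAt (fun t : ℝ => ∏ i, (1 + a i * t)) (∑ i, a i) 0 := by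
  have h := HasDerivAt.fun_finsetProd (u := Finset.univ) (x := (0 : ℝ))
    (f := fun i t => 1 + a i * t) (f' := a)
    (fun i _ => by simpa using ((hasDerivAt_id (0 : ℝ)).const_mul (a i)).const_add 1)
  simpa using h

theorem lawlorPP_eq_dslope (m : ℕ) (a : Fin m → ℝ) (x : ℝ) :
    lawlorPP m a x = dslope (fun t : ℝ => ∏ i, (1 + a i * t)) 0 (x ^ 2) := by
  by_cases hx : x = 0
  · simp [lawlorPP, hx, (hasDerivAt_prod_one_add_mul_zero m a).deriv]
  · rw [dslope_of_ne _ (pow_ne_zero 2 hx)]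
    simp [lawlorPP, lawlorP, hx, slope_def_field]

theorem continuous_lawlorPP (m : ℕ) (a : Fin m → ℝ) : Continuous (lawlorPP m a) := by
  have hd : Differentiable ℝ (fun t : ℝ => ∏ i, (1 + a i * t)) := by fun_prop
  have hc : Continuous (dslope (fun t : ℝ => ∏ i, (1 + a i * t)) 0) := by
    rw [← continuousOn_univ, continuousOn_dslope Filter.univ_mem]
    exact ⟨hd.continuous.continuousOn, hd 0⟩
  rw [funext (lawlorPP_eq_dslope m a)]
  exact hc.comp (continuous_pow 2)

theorem one_add_sum_le_prod_one_add {ι : Type*} (s : Finset ι) {f : ι → ℝ}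
    (hf : ∀ i ∈ s, 0 ≤ f i) : 1 + ∑ i ∈ s, f i ≤ ∏ i ∈ s, (1 + f i) := by
  classical
  induction s using Finset.induction_on with
  | empty => simp
  | insert j s hj ih =>
    rw [Finset.sum_insert hj, Finset.prod_insert hj]
    have ih' := ih fun i hi => hf i (Finset.mem_insert_of_mem hi)
    have hfj := hf j (Finset.mem_insert_self j s)
    have hs : 0 ≤ ∑ i ∈ s, f i :=
      Finset.sum_nonneg fun i hi => hf i (Finset.mem_insert_of_mem hi)
    nlinarith [mul_nonneg hfj hs]

/-- The lower bound for `P` coming from `∏ (1 + a_i x²) ≥ 1 + x² ∑ a_i`. -/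
theorem sum_le_lawlorPP (m : ℕ) (a : Fin m → ℝ) (ha : ∀ i, 0 < a i) (x : ℝ) :
    ∑ i, a i ≤ lawlorPP m a x := by
  by_cases hx : x = 0
  · simp [lawlorPP, hx]
  · have hx2 : 0 < x ^ 2 := by positivity
    have h := one_add_sum_le_prod_one_add Finset.univ
      (f := fun i => a i * x ^ 2) (fun i _ => mul_nonneg (ha i).le hx2.le)
    rw [← Finset.sum_mul] at h
    rw [lawlorPP, if_neg hx, lawlorP, le_div_iff₀ hx2]
    linarith

theorem lawlorPP_pos (m : ℕ) (a : Fin m → ℝ) (ha : ∀ i, 0 < a i) (k : Fin m) (x : ℝ) :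
    0 < lawlorPP m a x :=
  (Finset.sum_pos (fun i _ => ha i) ⟨k, Finset.mem_univ k⟩).trans_le (sum_le_lawlorPP m a ha x)

theorem continuous_lawlor_integrand (m : ℕ) (a : Fin m → ℝ) (ha : ∀ i, 0 < a i) (k : Fin m) :
    Continuous fun x : ℝ => 1 / ((1 + a k * x ^ 2) * Real.sqrt (lawlorPP m a x)) := by
  have hP := continuous_lawlorPP m a
  refine Continuous.div (by fun_prop) (by fun_prop) fun x => ?_
  have := ha k
  have := lawlorPP_pos m a ha k x
  positivity

theorem integrable_lawlor_integrand (m : ℕ) (a : Fin m → ℝ) (ha : ∀ i, 0 < a i) (k : Fin m) :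
    Integrable fun x : ℝ => 1 / ((1 + a k * x ^ 2) * Real.sqrt (lawlorPP m a x)) := by
  have hak := ha k
  have hS : 0 < ∑ i, a i := Finset.sum_pos (fun i _ => ha i) ⟨k, Finset.mem_univ k⟩
  have hI : Integrable fun x : ℝ => (1 + a k * x ^ 2)⁻¹ := by
    have h := integrable_inv_one_add_sq.comp_mul_left' (Real.sqrt_pos.2 hak).ne'
    simpa only [mul_pow, Real.sq_sqrt hak.le] using h
  refine (hI.const_mul (Real.sqrt (∑ i, a i))⁻¹).mono'
    (continuous_lawlor_integrand m a ha k).aestronglyMeasurable (ae_of_all _ fun x => ?_)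
  have hP := lawlorPP_pos m a ha k x
  have hle := Real.sqrt_le_sqrt (sum_le_lawlorPP m a ha x)
  have hS' := Real.sqrt_pos.2 hS
  rw [Real.norm_of_nonneg (by positivity), one_div, mul_inv, mul_comm]
  gcongr

theorem hasDerivAt_lawlorPsi (m : ℕ) (a : Fin m → ℝ) (ha : ∀ i, 0 < a i) (k : Fin m) (y : ℝ) :
    HasDerivAt (lawlorPsi m a k)
      (a k * (1 / ((1 + a k * y ^ 2) * Real.sqrt (lawlorPP m a y)))) y := by
  have hc := continuous_lawlor_integrand m a ha k
  have hI := integrable_lawlor_integrand m a ha k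
  -- Splitting the integral at `0` reduces to the fundamental theorem on a bounded interval.
  have hsplit : lawlorPsi m a k = fun t => a k *
      ((∫ x in Set.Iic (0 : ℝ), 1 / ((1 + a k * x ^ 2) * Real.sqrt (lawlorPP m a x))) +
        ∫ x in (0 : ℝ)..t, 1 / ((1 + a k * x ^ 2) * Real.sqrt (lawlorPP m a x))) := by
    funext t
    rw [lawlorPsi, ← intervalIntegral.integral_Iic_sub_Iic hI.integrableOn hI.integrableOn,
      add_sub_cancel]
  rw [hsplit]
  exact ((hc.integral_hasStrictDerivAt 0 y).hasDerivAt.const_add _).const_mul _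

/-- For `z = e^{iψ} r`, the quantity `Im (conj z' · z)` is `-ψ' r²`. -/
theorem im_conj_deriv_mul_polar {ψ r : ℝ → ℝ} {ψ' r' y : ℝ} (hψ : HasDerivAt ψ ψ' y)
    (hr : HasDerivAt r r' y) :
    ((starRingEnd ℂ) (deriv (fun t => Complex.exp (Complex.I * (ψ t : ℂ)) * (r t : ℂ)) y) *
      (Complex.exp (Complex.I * (ψ y : ℂ)) * (r y : ℂ))).im = -(ψ' * r y ^ 2) := by
  have h := ((hψ.ofReal_comp.const_mul Complex.I).cexp).mul hr.ofReal_comp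
  have he : (starRingEnd ℂ) (Complex.exp (Complex.I * (ψ y : ℂ))) *
      Complex.exp (Complex.I * (ψ y : ℂ)) = 1 := by
    rw [← Complex.exp_conj, ← Complex.exp_add]
    simp
  have hd : deriv (fun t => Complex.exp (Complex.I * (ψ t : ℂ)) * (r t : ℂ)) y =
      Complex.exp (Complex.I * (ψ y : ℂ)) * (Complex.I * ψ' * r y + r') := by
    refine HasDerivAt.deriv (h.congr_deriv ?_)
    ring
  have hz : (starRingEnd ℂ) (Complex.exp (Complex.I * (ψ y : ℂ)) *
        (Complex.I * ψ' * r y + r')) * (Complex.exp (Complex.I * (ψ y : ℂ)) * (r y : ℂ)) =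
      ((r' * r y : ℝ) : ℂ) + ((-(ψ' * r y ^ 2) : ℝ) : ℂ) * Complex.I := by
    simp only [map_mul, map_add, Complex.conj_I, Complex.conj_ofReal]
    push_cast
    linear_combination (-Complex.I * ψ' * r y + r') * r y * he
  rw [hd, hz]
  simp only [Complex.add_im, Complex.ofReal_im, Complex.im_ofReal_mul, Complex.I_im, mul_one,
    zero_add]

/-- The key identity: `Im (conj z_k' · z_k)` does not depend on `k`. -/
theorem lawlorZ_im_conj_deriv_mul (m : ℕ) (a : Fin m → ℝ) (ha : ∀ i, 0 < a i) (k : Fin m)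
    (y : ℝ) :
    ((starRingEnd ℂ) (deriv (lawlorZ m a k) y) * lawlorZ m a k y).im =
      -(1 / Real.sqrt (lawlorPP m a y)) := by
  have hak := ha k
  have hr0 : 0 < (a k)⁻¹ + y ^ 2 := by positivity
  have hr : HasDerivAt (fun t : ℝ => Real.sqrt ((a k)⁻¹ + t ^ 2)) _ y :=
    (((hasDerivAt_pow 2 y).const_add (a k)⁻¹).sqrt hr0.ne')
  have h := im_conj_deriv_mul_polar (hasDerivAt_lawlorPsi m a ha k y) hr
  have hP := Real.sqrt_pos.2 (lawlorPP_pos m a ha k y)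
  refine h.trans ?_
  rw [Real.sq_sqrt hr0.le]
  have : 0 < 1 + a k * y ^ 2 := by positivity
  field_simp

/-- The tangent vectors to Lawlor's `m`-fold `L^{φ,A}` are isotropic for the standard
symplectic form: `L^{φ,A}` is Lagrangian in `ℂ^m`. -/
theorem lawlor_isotropic (m : ℕ) (hm : 2 < m) (a : Fin m → ℝ) (ha : ∀ i, 0 < a i)
    (y : ℝ) (x v w : Fin m → ℝ)
    (hv : (∑ j, x j * v j) = 0) (hw : (∑ j, x j * w j) = 0) :
    stdSymplectic m (lawlorFDy m a y x) (lawlorFDx m a y v) = 0 ∧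
    stdSymplectic m (lawlorFDx m a y v) (lawlorFDx m a y w) = 0 := by
  constructor
  · have hterm : ∀ j, ((starRingEnd ℂ) (lawlorFDy m a y x j) * lawlorFDx m a y v j).im =
        -(1 / Real.sqrt (lawlorPP m a y)) * (x j * v j) := by
      intro j
      rw [← lawlorZ_im_conj_deriv_mul m a ha j y, ← Complex.im_mul_ofReal]
      congr 1
      simp only [lawlorFDy, lawlorFDx, map_mul, Complex.conj_ofReal]
      push_cast
      ring
    rw [stdSymplectic, Finset.sum_congr rfl fun j _ => hterm j, ← Finset.mul_sum, hv, mul_zero]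
  · refine Finset.sum_eq_zero fun j _ => ?_
    have hreal : (starRingEnd ℂ) (lawlorFDx m a y v j) * lawlorFDx m a y w j =
        ((Complex.normSq (lawlorZ m a j y) * (v j * w j) : ℝ) : ℂ) := by
      simp only [lawlorFDx, map_mul, Complex.conj_ofReal]
      push_cast
      rw [Complex.normSq_eq_conj_mul_self]
      ring
    rw [hreal, Complex.ofReal_im]
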